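/- Let x = 0. The uncertain transfer function value T(θ) = (e + Z_N·θ)/(1 + Z_D·θ) is {0,y,z}-dissipative (i.e. 2Re(conj(y)·T(θ)) + z ≤ 0) for every θ in the ellipsoid U if and only if there exist a real scalar ξ ≥ 0 and a real skew-symmetric matrix 𝒳 ∈ ℝ^{(n+1)×(n+1)} such that the Hermitian (n+1)×(n+1) complex matrix A₂*·y + conj(y)·A₂ + z·A₁ − ξ·B + i𝒳 is negative semidefinite. -/

import Mathlib

open Matrix
open scoped ComplexOrder

/-- A complex number `Δ` is `{x,y,z}`-dissipative if `x|Δ|² + 2Re(conj(y)·Δ) + z ≤ 0`. -/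
def Dissipative (x : ℝ) (y : ℂ) (z : ℝ) (Δ : ℂ) : Prop :=
  x * Complex.normSq Δ + 2 * (starRingEnd ℂ y * Δ).re + z ≤ 0

/-- The transfer function value `T(θ) = (e + Z_N·θ)/(1 + Z_D·θ)`. -/
noncomputable def Tval {n : ℕ} (e : ℂ) (ZN ZD : Fin n → ℂ) (θ : Fin n → ℝ) : ℂ :=
  (e + ∑ i, ZN i * (θ i : ℂ)) / (1 + ∑ i, ZD i * (θ i : ℂ))

/-- The ellipsoid `U = {θ ∈ ℝⁿ : (θ−θ̂)ᵀP⁻¹(θ−θ̂) < χ}`. -/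
noncomputable def ellipsoid {n : ℕ} (P : Matrix (Fin n) (Fin n) ℝ) (θhat : Fin n → ℝ)
    (χ : ℝ) : Set (Fin n → ℝ) :=
  {θ | (θ - θhat) ⬝ᵥ P⁻¹ *ᵥ (θ - θhat) < χ}

/-- The Hermitian matrix `A₁ = [[Z_D*Z_D, Z_D*],[Z_D, 1]] ∈ ℂ^{(n+1)×(n+1)}`. -/
def A1mat {n : ℕ} (ZD : Fin n → ℂ) : Matrix (Fin n ⊕ Unit) (Fin n ⊕ Unit) ℂ :=
  Matrix.fromBlocks
    (Matrix.of fun i j => starRingEnd ℂ (ZD i) * ZD j)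
    (Matrix.of fun i _ => starRingEnd ℂ (ZD i))
    (Matrix.of fun _ j => ZD j)
    (Matrix.of fun _ _ => 1)

/-- The matrix `A₂ = [[Z_D*Z_N, Z_D*e],[Z_N, e]] ∈ ℂ^{(n+1)×(n+1)}`. -/
def A2mat {n : ℕ} (e : ℂ) (ZN ZD : Fin n → ℂ) : Matrix (Fin n ⊕ Unit) (Fin n ⊕ Unit) ℂ :=
  Matrix.fromBlocks
    (Matrix.of fun i j => starRingEnd ℂ (ZD i) * ZN j)
    (Matrix.of fun i _ => starRingEnd ℂ (ZD i) * e)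
    (Matrix.of fun _ j => ZN j)
    (Matrix.of fun _ _ => e)

/-- The real symmetric matrix `B = [[P⁻¹, −P⁻¹θ̂],[−θ̂ᵀP⁻¹, θ̂ᵀP⁻¹θ̂ − χ]]`. -/
noncomputable def Bmat {n : ℕ} (P : Matrix (Fin n) (Fin n) ℝ) (θhat : Fin n → ℝ) (χ : ℝ) :
    Matrix (Fin n ⊕ Unit) (Fin n ⊕ Unit) ℝ :=
  Matrix.fromBlocks P⁻¹
    (Matrix.of fun i _ => -(P⁻¹ *ᵥ θhat) i)
    (Matrix.of fun _ j => -(θhat ᵥ* P⁻¹) j)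
    (Matrix.of fun _ _ => θhat ⬝ᵥ P⁻¹ *ᵥ θhat - χ)

/-!
At a point where the denominator `1 + Z_D·θ` does not vanish, multiplying the dissipation
inequality by its squared modulus turns it into `Re (vᴴ H v) ≤ 0` with `v = (θ, 1)` and
`H = A₂*·y + conj(y)·A₂ + z·A₁`. Up to a real scaling, these `v` with `θ ∈ U` are exactly the real
vectors with `vᵀ B v < 0`, so by the S-lemma the inequality on `U` amounts to
`Re (vᴴ H v) ≤ ξ vᵀ B v` for some `ξ ≥ 0` and all real `v`. On real vectors only the
entrywise real part of the Hermitian matrix `H - ξ B` matters, and its imaginary part is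
skew-symmetric: `i𝒳` can cancel it, leaving a real symmetric matrix, which is negative semidefinite
over `ℂ` as soon as it is over `ℝ`.
-/

section SLemma

theorem quadraticForm_add_smul {R M : Type*} [CommRing R] [AddCommGroup M] [Module R M]
    (Q : QuadraticForm R M) (u v : M) (s : R) :
    Q (u + s • v) = Q u + s * QuadraticMap.polar Q u v + s ^ 2 * Q v := by
  rw [QuadraticMap.map_add Q, QuadraticMap.polar_smul_right, QuadraticMap.map_smul, smul_eq_mul,
    smul_eq_mul]
  ring

theorem exists_nonneg_quadratic_eq_zero {a c : ℝ} (b : ℝ) (ha : a < 0) (hc : 0 ≤ c) :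
    ∃ s, 0 ≤ s ∧ a * (s * s) + b * s + c = 0 := by
  have hdiscrim : b ^ 2 ≤ discrim a b c := by
    have := mul_nonpos_of_nonpos_of_nonneg ha.le hc
    rw [discrim]
    linarith
  have hsqrt : |b| ≤ √(discrim a b c) := Real.abs_le_sqrt hdiscrim
  refine ⟨(-b - √(discrim a b c)) / (2 * a), div_nonneg_of_nonpos ?_ (by linarith), ?_⟩
  · linarith [neg_abs_le b]
  · exact (quadratic_eq_zero_iff ha.ne
      (Real.mul_self_sqrt ((sq_nonneg b).trans hdiscrim)).symm _).2 (.inr rfl)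

variable {V : Type*} [AddCommGroup V] [Module ℝ V] {Q B : QuadraticForm ℝ V}

theorem nonpos_of_nonpos_of_forall_neg (hQB : ∀ v, B v < 0 → Q v ≤ 0) {u v : V} (hv : B v < 0)
    (hu : B u ≤ 0) : Q u ≤ 0 := by
  wlog hpolar : QuadraticMap.polar B u v ≤ 0 generalizing v
  · exact this (v := -v) (by simpa) (by rw [QuadraticMap.polar_neg_right]; linarith)
  have hQ_line : ∀ s > 0, Q u + s * QuadraticMap.polar Q u v + s ^ 2 * Q v ≤ 0 := by
    intro s hs
    rw [← quadraticForm_add_smul]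
    apply hQB
    rw [quadraticForm_add_smul]
    have := mul_nonpos_of_nonneg_of_nonpos hs.le hpolar
    have := mul_neg_of_pos_of_neg (pow_pos hs 2) hv
    linarith
  have hcont : Continuous fun s : ℝ => Q u + s * QuadraticMap.polar Q u v + s ^ 2 * Q v := by
    fun_prop
  have hlim : Filter.Tendsto (fun s : ℝ => Q u + s * QuadraticMap.polar Q u v + s ^ 2 * Q v)
      (nhdsWithin 0 (Set.Ioi 0)) (nhds (Q u)) := by
    simpa using (hcont.tendsto 0).mono_left nhdsWithin_le_nhds
  exact le_of_tendsto hlim (Filter.eventually_of_mem self_mem_nhdsWithin hQ_line)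

theorem div_le_div_of_forall_eq_zero (hQB : ∀ u, B u = 0 → Q u ≤ 0) {v w : V} (hv : B v < 0)
    (hw : 0 < B w) : Q w / B w ≤ Q v / B v := by
  wlog hpolar : 0 ≤ QuadraticMap.polar (Q - (Q v / B v) • B) w v generalizing v
  · simpa using this (v := -v) (by simpa) (by
      rw [QuadraticMap.polar_neg_right, QuadraticMap.map_neg, QuadraticMap.map_neg]
      linarith)
  -- `F` vanishes at `v`, hence is affine along the line through `w` in the direction `v`.
  set F := Q - (Q v / B v) • B
  have hF (u : V) : F u = Q u - Q v / B v * B u := rfl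
  have hFv : F v = 0 := by rw [hF, div_mul_cancel₀ _ hv.ne, sub_self]
  obtain ⟨s, hs, hroot⟩ :=
    exists_nonneg_quadratic_eq_zero (QuadraticMap.polar B w v) hv hw.le
  have hBs : B (w + s • v) = 0 := by
    rw [quadraticForm_add_smul]
    linear_combination hroot
  have hFs : F (w + s • v) ≤ 0 := by
    rw [hF, hBs, mul_zero, sub_zero]
    exact hQB _ hBs
  rw [quadraticForm_add_smul, hFv] at hFs
  rw [div_le_iff₀ hw]
  linarith [hF w, mul_nonneg hs hpolar]

theorem forall_neg_imp_nonpos_iff_exists_le_mul (hB : ∃ v, B v < 0) :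
    (∀ v, B v < 0 → Q v ≤ 0) ↔ ∃ ξ, 0 ≤ ξ ∧ ∀ v, Q v ≤ ξ * B v := by
  refine ⟨fun hQB => ?_, fun ⟨ξ, hξ, hle⟩ v hv =>
    (hle v).trans (mul_nonpos_of_nonneg_of_nonpos hξ hv.le)⟩
  obtain ⟨v₀, hv₀⟩ := hB
  have hnull : ∀ u, B u = 0 → Q u ≤ 0 := fun u hu =>
    nonpos_of_nonpos_of_forall_neg hQB hv₀ hu.le
  let ratios := (fun v => Q v / B v) '' {v | B v < 0}
  have hne : ratios.Nonempty := ⟨_, v₀, hv₀, rfl⟩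
  have hlower : 0 ∈ lowerBounds ratios := by
    rintro _ ⟨v, hv, rfl⟩
    exact div_nonneg_of_nonpos (hQB v hv) (le_of_lt hv)
  refine ⟨sInf ratios, le_csInf hne hlower, fun v => ?_⟩
  rcases lt_trichotomy (B v) 0 with hv | hv | hv
  · rw [← le_div_iff_of_neg hv]
    exact csInf_le ⟨0, hlower⟩ ⟨v, hv, rfl⟩
  · rw [hv, mul_zero]
    exact hnull v hv
  · rw [← div_le_iff₀ hv]
    refine le_csInf hne ?_
    rintro _ ⟨u, hu, rfl⟩
    exact div_le_div_of_forall_eq_zero hnull hu hv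

end SLemma

section RealPart

variable {m : Type*}

theorem posSemidef_map_ofReal [Finite m] {M : Matrix m m ℝ} (hM : M.PosSemidef) :
    (M.map fun b => (b : ℂ)).PosSemidef := by
  obtain ⟨k, a, rfl⟩ := posSemidef_iff_eq_sum_vecMulVec.1 hM
  have hmap : (∑ i, vecMulVec (a i) (star (a i))).map (fun b => (b : ℂ)) =
      ∑ i, vecMulVec (fun j => (a i j : ℂ)) (star fun j => (a i j : ℂ)) := by
    ext j l
    simp [Matrix.sum_apply, vecMulVec_apply]
  rw [hmap]
  exact posSemidef_sum _ fun i _ => posSemidef_vecMulVec_self_star _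

variable [Fintype m] [DecidableEq m]

theorem toQuadraticForm'_apply {R : Type*} [CommRing R] (M : Matrix m m R) (v : m → R) :
    M.toQuadraticForm' v = v ⬝ᵥ M *ᵥ v :=
  toLinearMap₂'_apply' ..

/-- The quadratic form `v ↦ Re (vᴴ M v)` of a complex matrix `M`, restricted to real vectors `v`;
on those, it is the quadratic form of the entrywise real part of `M`. -/
def realPartForm (M : Matrix m m ℂ) : QuadraticForm ℝ (m → ℝ) :=
  (M.map Complex.re).toQuadraticForm'

theorem realPartForm_apply (M : Matrix m m ℂ) (v : m → ℝ) :
    realPartForm M v = v ⬝ᵥ M.map Complex.re *ᵥ v :=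
  toQuadraticForm'_apply ..

theorem realPartForm_eq_re (M : Matrix m m ℂ) (v : m → ℝ) :
    realPartForm M v = ((fun i => (v i : ℂ)) ⬝ᵥ M *ᵥ fun i => (v i : ℂ)).re := by
  simp [realPartForm_apply, dotProduct, mulVec]

theorem realPartForm_add (M N : Matrix m m ℂ) (v : m → ℝ) :
    realPartForm (M + N) v = realPartForm M v + realPartForm N v := by
  simp [realPartForm_eq_re, add_mulVec]

theorem realPartForm_ofReal_smul (r : ℝ) (M : Matrix m m ℂ) (v : m → ℝ) :
    realPartForm ((r : ℂ) • M) v = r * realPartForm M v := by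
  simp [realPartForm_eq_re, smul_mulVec]

theorem realPartForm_sub_smul_map_ofReal (M : Matrix m m ℂ) (B : Matrix m m ℝ) (ξ : ℝ)
    (v : m → ℝ) :
    realPartForm (M - (ξ : ℂ) • B.map fun b => (b : ℂ)) v =
      realPartForm M v - ξ * B.toQuadraticForm' v := by
  have hre : (M - (ξ : ℂ) • B.map fun b => (b : ℂ)).map Complex.re =
      M.map Complex.re - ξ • B := by
    ext; simp
  rw [realPartForm_apply, hre, sub_mulVec, dotProduct_sub, smul_mulVec, dotProduct_smul,
    ← realPartForm_apply, ← toQuadraticForm'_apply, smul_eq_mul]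

theorem realPartForm_conjTranspose (M : Matrix m m ℂ) : realPartForm Mᴴ = realPartForm M := by
  have hre : Mᴴ.map Complex.re = (M.map Complex.re)ᵀ := by ext; simp
  ext v
  rw [realPartForm_apply, realPartForm_apply, hre, dotProduct_transpose_mulVec]

theorem realPartForm_vecMulVec (a b : m → ℂ) (v : m → ℝ) :
    realPartForm (vecMulVec (star a) b) v =
      (star (a ⬝ᵥ fun i => (v i : ℂ)) * (b ⬝ᵥ fun i => (v i : ℂ))).re := by
  rw [realPartForm_eq_re, vecMulVec_mulVec, op_smul_eq_smul, dotProduct_smul, smul_eq_mul,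
    ← star_dotProduct_star, mul_comm]
  congr 3
  ext
  simp

theorem exists_skew_neg_add_posSemidef_iff {M : Matrix m m ℂ} (hM : M.IsHermitian) :
    (∃ X : Matrix m m ℝ, Xᵀ = -X ∧
        (-(M + Complex.I • X.map fun b => (b : ℂ))).PosSemidef) ↔
      ∀ v, realPartForm M v ≤ 0 := by
  constructor
  · rintro ⟨X, -, hX⟩ v
    have hre : (-(M + Complex.I • X.map fun b => (b : ℂ))).map Complex.re =
        -M.map Complex.re := by
      ext; simp
    have hnonneg := hX.re_dotProduct_nonneg fun i => (v i : ℂ)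
    have hstar : (star fun i => (v i : ℂ)) = fun i => (v i : ℂ) := by ext; simp
    rw [hstar, RCLike.re_eq_complex_re, ← realPartForm_eq_re, realPartForm_apply, hre, neg_mulVec,
      dotProduct_neg, ← realPartForm_apply] at hnonneg
    linarith
  · intro hform
    have hentry (i j : m) : star (M j i) = M i j := hM.apply i j
    refine ⟨-M.map Complex.im, ?_, ?_⟩
    · ext i j
      simp [← hentry i j]
    · have hreal : -(M + Complex.I • (-M.map Complex.im).map fun b => (b : ℂ)) =
          (-M.map Complex.re).map fun b => (b : ℂ) := by
        ext i j
        apply Complex.ext <;> simp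
      rw [hreal]
      refine posSemidef_map_ofReal (.of_dotProduct_mulVec_nonneg ?_ fun v => ?_)
      · ext i j
        simp [← hentry i j]
      · simpa [neg_mulVec, ← realPartForm_apply] using hform v

end RealPart

section Ellipsoid

variable {n : ℕ} {P : Matrix (Fin n) (Fin n) ℝ} {θhat θ : Fin n → ℝ} {χ t : ℝ}

theorem toQuadraticForm'_Bmat (P : Matrix (Fin n) (Fin n) ℝ) (θhat θ : Fin n → ℝ) (χ t : ℝ) :
    (Bmat P θhat χ).toQuadraticForm' (Sum.elim θ fun _ => t) =
      (θ - t • θhat) ⬝ᵥ P⁻¹ *ᵥ (θ - t • θhat) - χ * t ^ 2 := by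
  have hmulVec : Bmat P θhat χ *ᵥ (Sum.elim θ fun _ => t) =
      Sum.elim (P⁻¹ *ᵥ θ - t • P⁻¹ *ᵥ θhat)
        fun _ => -(θhat ⬝ᵥ P⁻¹ *ᵥ θ) + (θhat ⬝ᵥ P⁻¹ *ᵥ θhat - χ) * t := by
    rw [Bmat, fromBlocks_mulVec, dotProduct_mulVec θhat _ θ]
    ext (i | i) <;> simp [mulVec, dotProduct]
    ring
  rw [toQuadraticForm'_apply, hmulVec, sumElim_dotProduct_sumElim]
  simp only [mulVec_sub, mulVec_smul, sub_dotProduct, dotProduct_sub, smul_dotProduct,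
    dotProduct_smul, smul_eq_mul, dotProduct_pUnit]
  ring

theorem isHermitian_Bmat (hP : P.IsHermitian) (θhat : Fin n → ℝ) (χ : ℝ) :
    (Bmat P θhat χ).IsHermitian := by
  refine hP.inv.fromBlocks ?_ (by ext; simp)
  have hvec : θhat ᵥ* P⁻¹ = P⁻¹ *ᵥ θhat := by
    rw [← mulVec_transpose, ← conjTranspose_eq_transpose_of_trivial, hP.inv.eq]
  ext
  simp [hvec]

theorem mem_ellipsoid_iff_toQuadraticForm'_Bmat_neg :
    θ ∈ ellipsoid P θhat χ ↔ (Bmat P θhat χ).toQuadraticForm' (Sum.elim θ fun _ => 1) < 0 := by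
  rw [toQuadraticForm'_Bmat, one_smul, one_pow, mul_one, sub_neg]
  rfl

theorem ne_zero_of_toQuadraticForm'_Bmat_neg (hP : P.PosSemidef)
    (h : (Bmat P θhat χ).toQuadraticForm' (Sum.elim θ fun _ => t) < 0) : t ≠ 0 := by
  rintro rfl
  have hnonneg : 0 ≤ θ ⬝ᵥ P⁻¹ *ᵥ θ := hP.inv.dotProduct_mulVec_nonneg θ
  simp [toQuadraticForm'_Bmat, hnonneg.not_gt] at h

theorem forall_mem_ellipsoid_nonpos_iff (hP : P.PosSemidef) (θhat : Fin n → ℝ) (χ : ℝ)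
    (Q : QuadraticForm ℝ (Fin n ⊕ Unit → ℝ)) :
    (∀ θ ∈ ellipsoid P θhat χ, Q (Sum.elim θ fun _ => 1) ≤ 0) ↔
      ∀ v, (Bmat P θhat χ).toQuadraticForm' v < 0 → Q v ≤ 0 := by
  refine ⟨fun hQ v hv => ?_, fun hQ θ hθ =>
    hQ _ (mem_ellipsoid_iff_toQuadraticForm'_Bmat_neg.1 hθ)⟩
  obtain ⟨θ, t, rfl⟩ : ∃ θ t, v = Sum.elim θ fun _ => t :=
    ⟨v ∘ Sum.inl, v (Sum.inr ()), by ext (_ | _) <;> rfl⟩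
  have ht : t ≠ 0 := ne_zero_of_toQuadraticForm'_Bmat_neg hP hv
  have hscale : (Sum.elim θ fun _ : Unit => t) = t • Sum.elim (t⁻¹ • θ) fun _ => 1 := by
    ext (_ | _) <;> simp [ht]
  rw [hscale, QuadraticMap.map_smul, smul_eq_mul] at hv ⊢
  refine mul_nonpos_of_nonneg_of_nonpos (mul_self_nonneg t) (hQ _ ?_)
  rw [mem_ellipsoid_iff_toQuadraticForm'_Bmat_neg]
  exact neg_of_mul_neg_right hv (mul_self_nonneg t)

end Ellipsoid

section DissipationMatrix

variable {n : ℕ} (e : ℂ) (ZN ZD : Fin n → ℂ) (y : ℂ) (z : ℝ)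

/-- The Hermitian matrix `A₂*·y + conj(y)·A₂ + z·A₁`, whose form at `(θ, 1)` is the left-hand side
of the dissipation inequality for `T(θ)`, cleared of denominators. -/
noncomputable def dissipationMatrix : Matrix (Fin n ⊕ Unit) (Fin n ⊕ Unit) ℂ :=
  y • (A2mat e ZN ZD)ᴴ + starRingEnd ℂ y • A2mat e ZN ZD + (z : ℂ) • A1mat ZD

theorem A1mat_eq_vecMulVec :
    A1mat ZD = vecMulVec (star (Sum.elim ZD fun _ => 1)) (Sum.elim ZD fun _ => 1) := by
  ext (_ | _) (_ | _) <;> simp [A1mat, vecMulVec]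

theorem A2mat_eq_vecMulVec :
    A2mat e ZN ZD = vecMulVec (star (Sum.elim ZD fun _ => 1)) (Sum.elim ZN fun _ => e) := by
  ext (_ | _) (_ | _) <;> simp [A2mat, vecMulVec]

theorem dissipationMatrix_eq_conjTranspose_add_self_add :
    dissipationMatrix e ZN ZD y z =
      (starRingEnd ℂ y • A2mat e ZN ZD)ᴴ + starRingEnd ℂ y • A2mat e ZN ZD +
        (z : ℂ) • A1mat ZD := by
  simp [dissipationMatrix, conjTranspose_smul]

theorem isHermitian_dissipationMatrix : (dissipationMatrix e ZN ZD y z).IsHermitian := by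
  have hA1 : (A1mat ZD).IsHermitian := by
    rw [A1mat_eq_vecMulVec]
    exact (posSemidef_vecMulVec_star_self _).isHermitian
  rw [dissipationMatrix_eq_conjTranspose_add_self_add]
  exact (isHermitian_transpose_add_self _).add (hA1.smul (Complex.conj_ofReal z))

theorem realPartForm_dissipationMatrix {θ : Fin n → ℝ}
    (hden : (1 : ℂ) + ∑ i, ZD i * (θ i : ℂ) ≠ 0) :
    realPartForm (dissipationMatrix e ZN ZD y z) (Sum.elim θ fun _ => 1) =
      Complex.normSq (1 + ∑ i, ZD i * (θ i : ℂ)) *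
        (2 * (starRingEnd ℂ y * Tval e ZN ZD θ).re + z) := by
  have hdot (a : Fin n → ℂ) (c : ℂ) :
      ((Sum.elim a fun _ => c) ⬝ᵥ fun i => ((Sum.elim θ fun _ : Unit => 1) i : ℂ)) =
        c + ∑ i, a i * (θ i : ℂ) := by
    simp [dotProduct, add_comm]
  rw [dissipationMatrix_eq_conjTranspose_add_self_add, realPartForm_add, realPartForm_add,
    realPartForm_conjTranspose, realPartForm_ofReal_smul, A1mat_eq_vecMulVec, A2mat_eq_vecMulVec,
    ← vecMulVec_smul, realPartForm_vecMulVec, realPartForm_vecMulVec, smul_dotProduct, hdot, hdot,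
    Tval, smul_eq_mul]
  set d := 1 + ∑ i, ZD i * (θ i : ℂ)
  set w := e + ∑ i, ZN i * (θ i : ℂ)
  have hd : star d * d = (Complex.normSq d : ℂ) := (Complex.normSq_eq_conj_mul_self).symm
  have hw : star d * (starRingEnd ℂ y * w) =
      (Complex.normSq d : ℂ) * (starRingEnd ℂ y * (w / d)) := by
    rw [← hd]
    field_simp
  rw [hd, hw, Complex.re_ofReal_mul, Complex.ofReal_re]
  ring

theorem dissipative_Tval_iff_realPartForm_nonpos {θ : Fin n → ℝ}
    (hden : (1 : ℂ) + ∑ i, ZD i * (θ i : ℂ) ≠ 0) :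
    Dissipative 0 y z (Tval e ZN ZD θ) ↔
      realPartForm (dissipationMatrix e ZN ZD y z) (Sum.elim θ fun _ => 1) ≤ 0 := by
  rw [realPartForm_dissipationMatrix e ZN ZD y z hden, Dissipative, zero_mul, zero_add,
    ← not_lt, ← not_lt, mul_pos_iff_of_pos_left (Complex.normSq_pos.2 hden)]

end DissipationMatrix

/-- For `x = 0`, `T(θ)` is `{0,y,z}`-dissipative for every `θ` in the ellipsoid `U` iff
there exist `ξ ≥ 0` and a real skew-symmetric matrix `𝒳` such that the Hermitian matrix
`A₂*·y + conj(y)·A₂ + z·A₁ − ξ·B + i𝒳` is negative semidefinite. -/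
theorem dissipativity_x_zero_iff_LMI {n : ℕ} (e : ℂ) (ZN ZD : Fin n → ℂ)
    (P : Matrix (Fin n) (Fin n) ℝ) (hP : P.PosDef)
    (θhat : Fin n → ℝ) (χ : ℝ) (hχ : 0 < χ)
    (hden : ∀ θ ∈ ellipsoid P θhat χ, (1 : ℂ) + ∑ i, ZD i * (θ i : ℂ) ≠ 0)
    (y : ℂ) (z : ℝ) :
    (∀ θ ∈ ellipsoid P θhat χ, Dissipative 0 y z (Tval e ZN ZD θ)) ↔
      ∃ ξ : ℝ, 0 ≤ ξ ∧
        ∃ X : Matrix (Fin n ⊕ Unit) (Fin n ⊕ Unit) ℝ, Xᵀ = -X ∧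
          (-(y • (A2mat e ZN ZD)ᴴ + starRingEnd ℂ y • A2mat e ZN ZD +
              (z : ℂ) • A1mat ZD -
              (ξ : ℂ) • (Bmat P θhat χ).map (fun b => (b : ℂ)) +
              Complex.I • X.map (fun b => (b : ℂ)))).PosSemidef := by
  have hcenter : ∃ v, (Bmat P θhat χ).toQuadraticForm' v < 0 := by
    refine ⟨_, mem_ellipsoid_iff_toQuadraticForm'_Bmat_neg.1 (?_ : θhat ∈ _)⟩
    simpa [ellipsoid]
  have hHermitian (ξ : ℝ) : (dissipationMatrix e ZN ZD y z -
      (ξ : ℂ) • (Bmat P θhat χ).map fun b => (b : ℂ)).IsHermitian := by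
    refine (isHermitian_dissipationMatrix e ZN ZD y z).sub ?_
    exact ((isHermitian_Bmat hP.isHermitian θhat χ).map _ fun b =>
      (Complex.conj_ofReal b).symm).smul (Complex.conj_ofReal ξ)
  rw [forall₂_congr fun θ hθ =>
      dissipative_Tval_iff_realPartForm_nonpos e ZN ZD y z (hden θ hθ),
    forall_mem_ellipsoid_nonpos_iff hP.posSemidef,
    forall_neg_imp_nonpos_iff_exists_le_mul hcenter]
  refine exists_congr fun ξ => and_congr_right fun _ => ?_
  rw [← dissipationMatrix, exists_skew_neg_add_posSemidef_iff (hHermitian ξ)]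
  simp only [realPartForm_sub_smul_map_ofReal, sub_nonpos]
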